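/- arXiv:2511.10344 — 2 statements merged into one kernel-verified Lean document; each statement's English description precedes it below -/
import Mathlib

section
/- Let G be a connected simple graph on a finite vertex set, w ≥ 0 an integer, and suppose every vertex i has a gap-estimate sequence (Δ^m_{i,k}, r^m_{i,k}) for the same mean rewards μ_k ∈ [0,1]. Fix λ > 0, α ∈ [0, 1/2), and m ≥ 1, and define ñ^m_{j,k} = min{ 16·λ·(Δ^{m−1}_{j,k})^{−2}, λ·4^{m−1} } / ((1−2α)·v_j^w) and n^m_{i,k} = λ·(Δ^{m−1}_{i,k})^{−2} / ((1−2α)·|N_w(i)|). Then for every vertex i, every j ∈ N_w(i), and every arm k: ñ^m_{j,k} ≥ n^m_{i,k}. -/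
open Classical in
/-- The `w`-neighborhood `N_w(i) = {j : d(i,j) ≤ w}` of a vertex. -/
noncomputable def Nw {V : Type*} [Fintype V] (G : SimpleGraph V) (w : ℕ) (i : V) :
    Finset V :=
  Finset.univ.filter (fun j => G.dist i j ≤ w)

lemma mem_Nw_self {V : Type*} [Fintype V] (G : SimpleGraph V) (w : ℕ) (i : V) :
    i ∈ Nw G w i := by
  simp [Nw, SimpleGraph.dist_self]

lemma Nw_nonempty {V : Type*} [Fintype V] (G : SimpleGraph V) (w : ℕ) (i : V) :
    (Nw G w i).Nonempty :=
  ⟨i, mem_Nw_self G w i⟩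

/-- `v_i^w = min_{j ∈ N_w(i)} |N_w(j)|`. -/
noncomputable def vw {V : Type*} [Fintype V] (G : SimpleGraph V) (w : ℕ) (i : V) : ℕ :=
  ((Nw G w i).image (fun j => (Nw G w j).card)).min'
    ((Nw_nonempty G w i).image _)

/-- A gap-estimate sequence for mean rewards `μ`. -/
structure GapEstSeq {K : Type*} [Fintype K] [Nonempty K] (μ : K → ℝ) where
  D : ℕ → K → ℝ
  r : ℕ → K → ℝ
  hD0 : ∀ k, D 0 k = 1
  hr : ∀ (m : ℕ) (k : K), |r (m + 1) k - μ k| ≤ D m k / 8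
  hD : ∀ (m : ℕ) (k : K),
    D (m + 1) k = max ((2 : ℝ) ^ (-((m : ℤ) + 1)))
      ((Finset.univ.sup' Finset.univ_nonempty (fun k' => r (m + 1) k' - D m k' / 8))
        - r (m + 1) k)

/-!
By induction on `n`, every estimate `Δ^n_k` is within constant factors of the true gap `Δ_k`, up to
an error of order `2⁻ⁿ`: it is at most `8/7 Δ_k + 2⁻ⁿ`, and for `n ≥ 1` at least both `2⁻ⁿ` and
`6/7 Δ_k - 3/4 · 2⁻ⁿ`. Eliminating `Δ_k`, any two sequences for the same means satisfy
`Δ^n_k ≤ 4/3 Δ'^n_k + 2 · 2⁻ⁿ ≤ 4 Δ'^n_k`; for `n = 0` both are `1`. Squaring gives the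
factor `16`, while `2⁻ⁿ ≤ Δ^n_k` gives the cap `4ⁿ`. The denominators compare because
`i ∈ N_w(j)`, hence `v_j^w ≤ |N_w(i)|`.
-/

lemma inv_two_pow_succ (n : ℕ) : ((2 : ℝ) ^ (n + 1))⁻¹ = ((2 : ℝ) ^ n)⁻¹ / 2 := by
  rw [pow_succ, mul_inv, div_eq_mul_inv]

namespace GapEstSeq

variable {K : Type*} [Fintype K] [Nonempty K] {μ : K → ℝ} (S T : GapEstSeq μ)

/-- The largest lower confidence bound `r^m_* = max_k (r^m_k - Δ^{m-1}_k / 8)`, used to estimate the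
optimal mean. It is indexed by `n = m - 1`, so `S.rStar n` is `r^{n+1}_*`. -/
noncomputable def rStar (n : ℕ) : ℝ :=
  Finset.univ.sup' Finset.univ_nonempty fun k ↦ S.r (n + 1) k - S.D n k / 8

lemma D_succ (n : ℕ) (k : K) :
    S.D (n + 1) k = max ((2 : ℝ) ^ (n + 1))⁻¹ (S.rStar n - S.r (n + 1) k) := by
  rw [S.hD, rStar, zpow_neg]
  norm_cast

lemma rStar_le {c : ℝ} (hc : ∀ k, μ k ≤ c) (n : ℕ) : S.rStar n ≤ c := by
  refine Finset.sup'_le _ _ fun k _ ↦ ?_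
  linarith [(abs_le.1 (S.hr n k)).2, hc k]

lemma sub_D_div_four_le_rStar (n : ℕ) (k : K) : μ k - S.D n k / 4 ≤ S.rStar n := by
  have hle : S.r (n + 1) k - S.D n k / 8 ≤ S.rStar n :=
    Finset.le_sup' (fun k ↦ S.r (n + 1) k - S.D n k / 8) (Finset.mem_univ k)
  linarith [(abs_le.1 (S.hr n k)).1]

lemma inv_two_pow_le_D (n : ℕ) (k : K) : ((2 : ℝ) ^ n)⁻¹ ≤ S.D n k := by
  cases n with
  | zero => simp [S.hD0]
  | succ n => exact S.D_succ n k ▸ le_max_left _ _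

lemma D_pos (n : ℕ) (k : K) : 0 < S.D n k :=
  (by positivity : (0 : ℝ) < (2 ^ n)⁻¹).trans_le (S.inv_two_pow_le_D n k)

-- `8 / 7` is the fixed point of `x ↦ 1 + x / 8`, by which the coefficient of the gap evolves.
lemma D_le_gap_add {c : ℝ} (hc : ∀ k, μ k ≤ c) (n : ℕ) (k : K) :
    S.D n k ≤ 8 / 7 * (c - μ k) + ((2 : ℝ) ^ n)⁻¹ := by
  have hgap : 0 ≤ c - μ k := sub_nonneg.2 (hc k)
  induction n with
  | zero =>
    rw [S.hD0, pow_zero, inv_one]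
    linarith
  | succ n ih =>
    have hhalf := inv_two_pow_succ n
    have hpos : 0 < ((2 : ℝ) ^ n)⁻¹ := by positivity
    rw [S.D_succ]
    refine max_le (by linarith) ?_
    linarith [S.rStar_le hc n, (abs_le.1 (S.hr n k)).1]

lemma gap_sub_le_D_succ {kstar : K} (hmax : ∀ k, μ k ≤ μ kstar) (n : ℕ) (k : K) :
    6 / 7 * (μ kstar - μ k) - 3 / 4 * ((2 : ℝ) ^ (n + 1))⁻¹ ≤ S.D (n + 1) k := by
  have hhalf := inv_two_pow_succ n
  have hstar : S.D n kstar ≤ ((2 : ℝ) ^ n)⁻¹ := by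
    simpa using S.D_le_gap_add hmax n kstar
  calc 6 / 7 * (μ kstar - μ k) - 3 / 4 * ((2 : ℝ) ^ (n + 1))⁻¹
      ≤ μ kstar - S.D n kstar / 4 - (μ k + S.D n k / 8) := by
        linarith [S.D_le_gap_add hmax n k]
    _ ≤ S.rStar n - S.r (n + 1) k :=
        sub_le_sub (S.sub_D_div_four_le_rStar n kstar)
          (by linarith [(abs_le.1 (S.hr n k)).2])
    _ ≤ S.D (n + 1) k := S.D_succ n k ▸ le_max_right _ _

lemma D_le_four_mul_D (n : ℕ) (k : K) : S.D n k ≤ 4 * T.D n k := by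
  cases n with
  | zero => norm_num [S.hD0, T.hD0]
  | succ n =>
    obtain ⟨kstar, hmax⟩ := Finite.exists_max μ
    linarith [S.D_le_gap_add hmax (n + 1) k, T.gap_sub_le_D_succ hmax n k,
      T.inv_two_pow_le_D (n + 1) k, T.D_pos (n + 1) k]

lemma inv_sq_D_le_four_pow (n : ℕ) (k : K) : (S.D n k ^ 2)⁻¹ ≤ 4 ^ n := by
  have hinv : (S.D n k)⁻¹ ≤ 2 ^ n := inv_le_of_inv_le₀ (by positivity) (S.inv_two_pow_le_D n k)
  have hpos := S.D_pos n k
  calc (S.D n k ^ 2)⁻¹ = (S.D n k)⁻¹ ^ 2 := (inv_pow _ _).symm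
    _ ≤ (2 ^ n) ^ 2 := by gcongr
    _ = 4 ^ n := by rw [← pow_mul, mul_comm, pow_mul]; norm_num

lemma inv_sq_D_le_sixteen_mul (n : ℕ) (k : K) :
    (S.D n k ^ 2)⁻¹ ≤ 16 * (T.D n k ^ 2)⁻¹ := by
  have hS := S.D_pos n k
  have hT := T.D_pos n k
  calc (S.D n k ^ 2)⁻¹ = 16 * ((4 * S.D n k) ^ 2)⁻¹ := by field_simp; norm_num
    _ ≤ 16 * (T.D n k ^ 2)⁻¹ := by gcongr; exact T.D_le_four_mul_D S n k

lemma mul_inv_sq_D_le_min {lam : ℝ} (hlam : 0 ≤ lam) (n : ℕ) (k : K) :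
    lam * (S.D n k ^ 2)⁻¹ ≤ min (16 * lam * (T.D n k ^ 2)⁻¹) (lam * 4 ^ n) := by
  refine le_min ?_ (mul_le_mul_of_nonneg_left (S.inv_sq_D_le_four_pow n k) hlam)
  calc lam * (S.D n k ^ 2)⁻¹ ≤ lam * (16 * (T.D n k ^ 2)⁻¹) :=
        mul_le_mul_of_nonneg_left (S.inv_sq_D_le_sixteen_mul T n k) hlam
    _ = 16 * lam * (T.D n k ^ 2)⁻¹ := by ring

end GapEstSeq

section Neighborhoods

variable {V : Type*} [Fintype V] (G : SimpleGraph V) (w : ℕ)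

lemma mem_Nw_comm {i j : V} : i ∈ Nw G w j ↔ j ∈ Nw G w i := by
  simp only [Nw, Finset.mem_filter_univ, G.dist_comm]

lemma isLeast_vw (i : V) : IsLeast ((fun a ↦ (Nw G w a).card) '' Nw G w i) (vw G w i) := by
  simpa only [vw, Finset.coe_image] using
    ((Nw G w i).image fun a ↦ (Nw G w a).card).isLeast_min' ((Nw_nonempty G w i).image _)

end Neighborhoods

/-- Here `N` replaces `N_w` and `v` replaces `v_j^w`; the round is `m = n + 1`. -/
theorem stmt_7_general {V K : Type*} [Fintype K] [Nonempty K] {μ : K → ℝ}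
    {N : V → Finset V} (hN : ∀ a, (N a).Nonempty) (S : V → GapEstSeq μ)
    {lam α : ℝ} (hlam : 0 ≤ lam) (hα : α < 1 / 2) (n : ℕ)
    {i j : V} (hi : i ∈ N j) {v : ℕ} (hv : IsLeast ((fun a ↦ (N a).card) '' N j) v) (k : K) :
    lam * ((S i).D n k ^ 2)⁻¹ / ((1 - 2 * α) * (N i).card) ≤
      min (16 * lam * ((S j).D n k ^ 2)⁻¹) (lam * 4 ^ n) / ((1 - 2 * α) * v) := by
  have hv_le : v ≤ (N i).card := hv.2 ⟨i, hi, rfl⟩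
  have hv_pos : 0 < v := by
    obtain ⟨a, -, rfl⟩ := hv.1
    exact (hN a).card_pos
  have hα_pos : 0 < 1 - 2 * α := by linarith
  have hquota := (S i).mul_inv_sq_D_le_min (S j) hlam n k
  have hquota_nonneg : 0 ≤ lam * ((S i).D n k ^ 2)⁻¹ := by positivity
  exact div_le_div₀ (hquota_nonneg.trans hquota) hquota (by positivity) (by gcongr)

/-- Pull-count domination over the network: each neighbor `j ∈ N_w(i)`'s planned
pull count `ñ^m_{j,k}` dominates agent `i`'s per-neighbor quota `n^m_{i,k}`. -/
theorem stmt_7 {V : Type*} [Fintype V] (G : SimpleGraph V) (hG : G.Connected) (w : ℕ)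
    {K : Type*} [Fintype K] [Nonempty K]
    (μ : K → ℝ) (hμ : ∀ k, μ k ∈ Set.Icc (0 : ℝ) 1)
    (kstar : K) (hks : ∀ k, μ k ≤ μ kstar)
    (S : V → GapEstSeq μ)
    (lam α : ℝ) (hlam : 0 < lam) (hα0 : 0 ≤ α) (hα : α < 1 / 2)
    (m : ℕ) (hm : 1 ≤ m)
    (i j : V) (hj : j ∈ Nw G w i) (k : K) :
    lam * (((S i).D (m - 1) k) ^ 2)⁻¹ / ((1 - 2 * α) * ((Nw G w i).card : ℝ)) ≤
      min (16 * lam * (((S j).D (m - 1) k) ^ 2)⁻¹) (lam * 4 ^ (m - 1)) /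
        ((1 - 2 * α) * ((vw G w j : ℕ) : ℝ)) :=
  stmt_7_general (Nw_nonempty G w) S hlam.le hα (m - 1) ((mem_Nw_comm G w).2 hj)
    (isLeast_vw G w j) k
end

section
/- Fix a finite nonempty set of arms K with mean rewards μ_k ∈ [0,1], an optimal arm k* with μ_{k*} = max_k μ_k, and gaps Δ_k = μ_{k*} − μ_k. Let c_1, c_2, … be nonnegative reals and set ρ_0 = 0 and ρ_m = Σ_{s=1}^m c_s · 8^{s−m}. Suppose Δ^0_k = 1 for all k, and for every m ≥ 1 there are reals r^m_k with |r^m_k − μ_k| ≤ Δ^{m−1}_k/8 + 2c_m for all k, r^m_* = max_k (r^m_k − Δ^{m−1}_k/8), and Δ^m_k = max(2^{−m}, r^m_* − r^m_k). Then for every m ≥ 0 and every arm k: (6/7)·Δ_k − (3/4)·2^{−m} − 12·ρ_m ≤ Δ^m_k ≤ (8/7)·Δ_k + 2^{−m} + 4·ρ_m. -/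
/-! The confidence width of an arm is an eighth of its current gap estimate, so an estimate enters
the next one with weight `1/8`. Unrolling `x ↦ Δ + x / 8 + 4c` gives the factor
`∑ 8⁻ⁱ = 8/7` on the true gap and discounts old corruption by powers of `8`. The lower bound needs
no induction of its own: compared with a near-optimal arm, one epoch loses two widths of that arm
and one of arm `k`, and the upper bound for the preceding epoch controls all of them. -/

/-- The sum `∑_{s=1}^m c_s b^{s-m}`, which is the offset rate `ρ_m` of the corruption rates `c` when
`b = 8`. -/
def discountedSum {𝕜 : Type*} [DivisionRing 𝕜] (b : 𝕜) (c : ℕ → 𝕜) (m : ℕ) : 𝕜 :=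
  ∑ s ∈ Finset.Icc 1 m, c s * b ^ ((s : ℤ) - (m : ℤ))

theorem discountedSum_zero {𝕜 : Type*} [DivisionRing 𝕜] (b : 𝕜) (c : ℕ → 𝕜) :
    discountedSum b c 0 = 0 := by
  simp [discountedSum]

theorem discountedSum_succ {𝕜 : Type*} [DivisionRing 𝕜] {b : 𝕜} (hb : b ≠ 0) (c : ℕ → 𝕜) (m : ℕ) :
    discountedSum b c (m + 1) = discountedSum b c m / b + c (m + 1) := by
  have hterm (s : ℕ) :
      c s * b ^ ((s : ℤ) - ((m + 1 : ℕ) : ℤ)) = c s * b ^ ((s : ℤ) - (m : ℤ)) / b := by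
    rw [Nat.cast_succ, ← sub_sub, zpow_sub_one₀ hb, ← mul_assoc, ← div_eq_mul_inv]
  rw [discountedSum, Finset.sum_Icc_succ_top (Nat.le_add_left 1 m), sub_self, zpow_zero, mul_one,
    Finset.sum_congr rfl fun s _ => hterm s, ← Finset.sum_div, ← discountedSum]

theorem zpow_neg_add_one₀ {G₀ : Type*} [GroupWithZero G₀] {a : G₀} (ha : a ≠ 0) (n : ℤ) :
    a ^ (-(n + 1)) = a ^ (-n) / a := by
  rw [neg_add', zpow_sub_one₀ ha, div_eq_mul_inv]

theorem isLUB_range_sup'_univ {ι α : Type*} [Fintype ι] [Nonempty ι] [SemilatticeSup α]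
    (f : ι → α) : IsLUB (Set.range f) (Finset.univ.sup' Finset.univ_nonempty f) :=
  ⟨Set.forall_mem_range.2 fun i => Finset.le_sup' f (Finset.mem_univ i),
    fun _ hb => Finset.sup'_le _ _ fun i _ => hb (Set.mem_range_self i)⟩

section LinearOrderedField

variable {𝕜 : Type*} [Field 𝕜] [LinearOrder 𝕜] [IsStrictOrderedRing 𝕜]

theorem discountedSum_nonneg {b : 𝕜} (hb : 0 ≤ b) {c : ℕ → 𝕜} (hc : ∀ m, 0 ≤ c m) (m : ℕ) :
    0 ≤ discountedSum b c m :=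
  Finset.sum_nonneg fun s _ => mul_nonneg (hc s) (zpow_nonneg hb _)

theorem le_add_discountedSum_of_succ_le_max {x c : ℕ → 𝕜} {δ : 𝕜} (hδ : 0 ≤ δ) (hc : ∀ m, 0 ≤ c m)
    (hx0 : x 0 ≤ 1)
    (hx : ∀ m : ℕ,
      x (m + 1) ≤ max ((2 : 𝕜) ^ (-((m : ℤ) + 1))) (δ + x m / 8 + 4 * c (m + 1)))
    (m : ℕ) :
    x m ≤ (8 / 7) * δ + (2 : 𝕜) ^ (-(m : ℤ)) + 4 * discountedSum 8 c m := by
  induction m with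
  | zero =>
    rw [discountedSum_zero, Nat.cast_zero, neg_zero, zpow_zero]
    linarith
  | succ m ih =>
    have hpow : (0 : 𝕜) < 2 ^ (-(m : ℤ)) := zpow_pos two_pos _
    have hρ : 0 ≤ discountedSum 8 c m := discountedSum_nonneg (by norm_num) hc m
    have hcm := hc (m + 1)
    refine (hx m).trans ?_
    rw [Nat.cast_succ, zpow_neg_add_one₀ two_ne_zero, discountedSum_succ (by norm_num)]
    apply max_le <;> linarith

section Epoch

variable {K : Type*} {μ r w : K → 𝕜} {ε rstar : 𝕜}

theorem offset_sub_le_gap_add {μstar : 𝕜} (hμ : ∀ k, μ k ≤ μstar) (hr : ∀ k, |r k - μ k| ≤ w k + ε)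
    (hrstar : IsLUB (Set.range fun k => r k - w k) rstar) (k : K) :
    rstar - r k ≤ μstar - μ k + w k + 2 * ε := by
  have hrstar_le : rstar ≤ μstar + ε := by
    refine hrstar.2 (Set.forall_mem_range.2 fun j => ?_)
    linarith [(abs_le.mp (hr j)).2, hμ j]
  linarith [(abs_le.mp (hr k)).1]

theorem mean_sub_sub_le_offset_sub (hr : ∀ k, |r k - μ k| ≤ w k + ε)
    (hrstar : IsLUB (Set.range fun k => r k - w k) rstar) (j k : K) :
    μ j - μ k - 2 * w j - w k - 2 * ε ≤ rstar - r k := by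
  have hle_rstar : r j - w j ≤ rstar := hrstar.1 (Set.mem_range_self j)
  linarith [(abs_le.mp (hr j)).1, (abs_le.mp (hr k)).2]

end Epoch

/-- `D m k` is the gap estimate `Δ^m_k` computed from reward estimates `r m k` of the means `μ k`
under corruption rates `c m`. The offset `rstar` of epoch `m + 1` is described as a least upper
bound, so that the set of arms may be infinite. -/
structure IsGapEstimate {K : Type*} (μ : K → 𝕜) (c : ℕ → 𝕜) (D r : ℕ → K → 𝕜) : Prop where
  init : ∀ k, D 0 k = 1
  abs_sub_le : ∀ m k, |r (m + 1) k - μ k| ≤ D m k / 8 + 2 * c (m + 1)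
  succ : ∀ m : ℕ, ∃ rstar, IsLUB (Set.range fun k => r (m + 1) k - D m k / 8) rstar ∧
    ∀ k, D (m + 1) k = max ((2 : 𝕜) ^ (-((m : ℤ) + 1))) (rstar - r (m + 1) k)

namespace IsGapEstimate

variable {K : Type*} {μ : K → 𝕜} {μstar : 𝕜} {c : ℕ → 𝕜} {D r : ℕ → K → 𝕜}

theorem le_gap_add (h : IsGapEstimate μ c D r) (hμ : ∀ k, μ k ≤ μstar) (hc : ∀ m, 0 ≤ c m)
    (m : ℕ) (k : K) :
    D m k ≤ (8 / 7) * (μstar - μ k) + (2 : 𝕜) ^ (-(m : ℤ)) + 4 * discountedSum 8 c m := by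
  refine le_add_discountedSum_of_succ_le_max (x := fun n => D n k) (sub_nonneg.2 (hμ k)) hc
    (h.init k).le (fun n => ?_) m
  obtain ⟨rstar, hrstar, hD⟩ := h.succ n
  have hstep := offset_sub_le_gap_add hμ (h.abs_sub_le n) hrstar k
  exact (hD k).trans_le (max_le_max_left _ (by linarith))

theorem gap_sub_le (h : IsGapEstimate μ c D r) (hμstar : IsLUB (Set.range μ) μstar)
    (hgap : ∀ k, μstar - μ k ≤ 1) (hc : ∀ m, 0 ≤ c m) (m : ℕ) (k : K) :
    (6 / 7) * (μstar - μ k) - (3 / 4) * (2 : 𝕜) ^ (-(m : ℤ)) - 12 * discountedSum 8 c m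
      ≤ D m k := by
  cases m with
  | zero =>
    rw [h.init, discountedSum_zero, Nat.cast_zero, neg_zero, zpow_zero]
    linarith [hgap k]
  | succ n =>
    obtain ⟨rstar, hrstar, hD⟩ := h.succ n
    have hupper := h.le_gap_add (Set.forall_mem_range.1 hμstar.1) hc n
    have hle_max : rstar - r (n + 1) k ≤ D (n + 1) k := (le_max_right _ _).trans_eq (hD k).symm
    -- Solve the one-epoch bound against arm `j` for `μ j`, then take the supremum over `j`.
    have hμstar_le : μstar ≤ (7 / 9) * (D (n + 1) k + (2 / 7) * μstar + μ k
        + (1 / 7) * (μstar - μ k) + (3 / 8) * (2 : 𝕜) ^ (-(n : ℤ))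
        + (3 / 2) * discountedSum 8 c n + 4 * c (n + 1)) := by
      refine hμstar.2 (Set.forall_mem_range.2 fun j => ?_)
      linarith [mean_sub_sub_le_offset_sub (h.abs_sub_le n) hrstar j k, hupper j, hupper k]
    rw [Nat.cast_succ, zpow_neg_add_one₀ two_ne_zero, discountedSum_succ (by norm_num)]
    linarith [hc (n + 1)]

end IsGapEstimate

theorem stmt_12_general {K : Type*} {μ : K → 𝕜} {μstar : 𝕜} (hμstar : IsLUB (Set.range μ) μstar)
    (hgap : ∀ k, μstar - μ k ≤ 1) {c : ℕ → 𝕜} (hc : ∀ m, 0 ≤ c m)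
    {ρ : ℕ → 𝕜} (hρ0 : ρ 0 = 0)
    (hρ : ∀ m, 1 ≤ m →
      ρ m = ∑ s ∈ Finset.Icc 1 m, c s * (8 : 𝕜) ^ ((s : ℤ) - (m : ℤ)))
    {D r : ℕ → K → 𝕜} (h : IsGapEstimate μ c D r) (m : ℕ) (k : K) :
    (6 / 7) * (μstar - μ k) - (3 / 4) * (2 : 𝕜) ^ (-(m : ℤ)) - 12 * ρ m ≤ D m k ∧
    D m k ≤ (8 / 7) * (μstar - μ k) + (2 : 𝕜) ^ (-(m : ℤ)) + 4 * ρ m := by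
  have hρ_eq : ρ m = discountedSum 8 c m := by
    cases m with
    | zero => rw [hρ0, discountedSum_zero]
    | succ n => exact hρ (n + 1) n.succ_pos
  rw [hρ_eq]
  exact ⟨h.gap_sub_le hμstar hgap hc m k,
    h.le_gap_add (Set.forall_mem_range.1 hμstar.1) hc m k⟩

end LinearOrderedField

/-- Corrupted gap-estimate induction: with normalized per-epoch corruption
rates `c m` and discounted offset rates `ρ m = Σ_{s=1}^m c_s 8^{s−m}`, the gap
estimates satisfy
`(6/7)Δ_k − (3/4)2^{−m} − 12ρ_m ≤ Δ^m_k ≤ (8/7)Δ_k + 2^{−m} + 4ρ_m`. -/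
theorem stmt_12 {K : Type*} [Fintype K] [Nonempty K]
    (μ : K → ℝ) (hμ : ∀ k, μ k ∈ Set.Icc (0 : ℝ) 1)
    (kstar : K) (hks : ∀ k, μ k ≤ μ kstar)
    (c : ℕ → ℝ) (hc : ∀ m, 0 ≤ c m)
    (ρ : ℕ → ℝ) (hρ0 : ρ 0 = 0)
    (hρ : ∀ m, 1 ≤ m →
      ρ m = ∑ s ∈ Finset.Icc 1 m, c s * (8 : ℝ) ^ ((s : ℤ) - (m : ℤ)))
    (D : ℕ → K → ℝ) (r : ℕ → K → ℝ)
    (hD0 : ∀ k, D 0 k = 1)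
    (hr : ∀ (m : ℕ) (k : K), |r (m + 1) k - μ k| ≤ D m k / 8 + 2 * c (m + 1))
    (hD : ∀ (m : ℕ) (k : K),
      D (m + 1) k = max ((2 : ℝ) ^ (-((m : ℤ) + 1)))
        ((Finset.univ.sup' Finset.univ_nonempty (fun k' => r (m + 1) k' - D m k' / 8))
          - r (m + 1) k))
    (m : ℕ) (k : K) :
    (6 / 7) * (μ kstar - μ k) - (3 / 4) * (2 : ℝ) ^ (-(m : ℤ)) - 12 * ρ m ≤ D m k ∧
    D m k ≤ (8 / 7) * (μ kstar - μ k) + (2 : ℝ) ^ (-(m : ℤ)) + 4 * ρ m := by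
  exact stmt_12_general (IsGreatest.isLUB ⟨Set.mem_range_self kstar, Set.forall_mem_range.2 hks⟩)
    (fun k => by linarith [(hμ kstar).2, (hμ k).1]) hc hρ0 hρ
    ⟨hD0, hr, fun n => ⟨_, isLUB_range_sup'_univ _, hD n⟩⟩ m k
end
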